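/- In the noisy linear MR-LS dynamics, the total probability mass assigned to corrupted examples decays exponentially: for every t ≥ 0, Σ_{j ∈ I_cr} p_{t,j} ≤ exp(−η ε² Δ t) / (1 + Δ). -/

import Mathlib

open Real Finset

/-!
Flipping signs by `x i` turns the model into the estimation of the constant `1`: with
`ξ i = x i * e i` the loss of example `i` is `((θ - 1) - ξ i) ^ 2 / 2`, where `ξ` vanishes on clean
examples and has absolute value `ε` on corrupted ones. While the corrupted mass is at most `σ`, the
fit satisfies `|θ - 1| ≤ σ * ε`, so in that round each corrupted example loses at least
`(1 / 2 - σ) * ε ^ 2` more than each clean one. Since this gap is nonnegative, the odds of the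
corrupted set never exceed their initial value, which keeps the corrupted mass at most `σ` in all
later rounds; the gaps then add up.
-/

lemma card_nsmul_sum_le_card_nsmul_sum {α β M : Type*} [AddCommMonoid M] [PartialOrder M]
    [IsOrderedAddMonoid M] {A : Finset α} {B : Finset β} {v : α → M} {w : β → M}
    (h : ∀ i ∈ A, ∀ j ∈ B, v i ≤ w j) : #B • ∑ i ∈ A, v i ≤ #A • ∑ j ∈ B, w j := by
  calc #B • ∑ i ∈ A, v i = ∑ i ∈ A, #B • v i := smul_sum
    _ ≤ ∑ _ ∈ A, ∑ j ∈ B, w j := sum_le_sum fun i hi ↦ card_nsmul_le_sum B w (v i) (h i hi)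
    _ = #A • ∑ j ∈ B, w j := sum_const _

section ExponentialWeights

variable {ι : Type*} [Fintype ι]

/-- The multiplicative-weights (Gibbs) distribution on `ι` with step size `η` for the accumulated
losses `L`. -/
noncomputable def expWeights (η : ℝ) (L : ι → ℝ) (i : ι) : ℝ :=
  exp (-η * L i) / ∑ j, exp (-η * L j)

lemma expWeights_nonneg (η : ℝ) (L : ι → ℝ) (i : ι) : 0 ≤ expWeights η L i := by
  unfold expWeights
  positivity

lemma sum_expWeights [Nonempty ι] (η : ℝ) (L : ι → ℝ) : ∑ i, expWeights η L i = 1 := by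
  have partition_pos : 0 < ∑ j, exp (-η * L j) := sum_pos (fun _ _ ↦ exp_pos _) univ_nonempty
  simp only [expWeights]
  rw [← sum_div, div_self partition_pos.ne']

lemma expWeights_zero (η : ℝ) (i : ι) : expWeights η 0 i = 1 / Fintype.card ι := by
  simp [expWeights]

lemma expWeights_le_exp_mul_of_add_le {η g : ℝ} {L : ι → ℝ} {i j : ι} (hη : 0 ≤ η)
    (hgap : L j + g ≤ L i) : expWeights η L i ≤ exp (-η * g) * expWeights η L j := by
  unfold expWeights
  rw [← mul_div_assoc, ← exp_add]
  gcongr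
  linarith [mul_le_mul_of_nonneg_left hgap hη]

lemma one_sub_mul_sum_le_of_le_mul [Nonempty ι] {A : Finset ι} {w : ι → ℝ} {σ r : ℝ}
    (hw : ∀ i, 0 ≤ w i) (hr : 0 ≤ r) (hA : (#A : ℝ) ≤ σ * Fintype.card ι)
    (hratio : ∀ i ∈ A, ∀ j ∉ A, w i ≤ r * w j) :
    (1 - σ) * ∑ i ∈ A, w i ≤ σ * r * (∑ i, w i - ∑ i ∈ A, w i) := by
  classical
  have card_pos : (0 : ℝ) < Fintype.card ι := mod_cast Fintype.card_pos
  have mass_nonneg : 0 ≤ ∑ i ∈ A, w i := sum_nonneg fun i _ ↦ hw i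
  have compl_mass : ∑ i, w i - ∑ i ∈ A, w i = ∑ j ∈ Aᶜ, w j := by
    rw [← sum_add_sum_compl A w, add_sub_cancel_left]
  have compl_mass_nonneg : 0 ≤ ∑ j ∈ Aᶜ, w j := sum_nonneg fun j _ ↦ hw j
  have compl_card : (#Aᶜ : ℝ) = Fintype.card ι - #A := by
    rw [card_compl, Nat.cast_sub (card_le_univ A)]
  have pair_sum : #Aᶜ * ∑ i ∈ A, w i ≤ #A * (r * ∑ j ∈ Aᶜ, w j) := by
    rw [← nsmul_eq_mul, ← nsmul_eq_mul, mul_sum]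
    exact card_nsmul_sum_le_card_nsmul_sum fun i hi j hj ↦ hratio i hi j (mem_compl.mp hj)
  rw [compl_mass]
  refine le_of_mul_le_mul_left ?_ card_pos
  calc Fintype.card ι * ((1 - σ) * ∑ i ∈ A, w i)
      = (Fintype.card ι - σ * Fintype.card ι) * ∑ i ∈ A, w i := by ring
    _ ≤ #Aᶜ * ∑ i ∈ A, w i := by rw [compl_card]; gcongr
    _ ≤ #A * (r * ∑ j ∈ Aᶜ, w j) := pair_sum
    _ ≤ σ * Fintype.card ι * (r * ∑ j ∈ Aᶜ, w j) := by gcongr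
    _ = Fintype.card ι * (σ * r * ∑ j ∈ Aᶜ, w j) := by ring

lemma nonneg_of_card_le_mul_card [Nonempty ι] {A : Finset ι} {σ : ℝ}
    (hA : (#A : ℝ) ≤ σ * Fintype.card ι) : 0 ≤ σ :=
  nonneg_of_mul_nonneg_left ((Nat.cast_nonneg #A).trans hA) (mod_cast Fintype.card_pos)

end ExponentialWeights

section NoisySigns

lemma half_sq_residual_eq {x : ℝ} (hx : x ^ 2 = 1) (θ e : ℝ) :
    1 / 2 * (θ * x - (x + e)) ^ 2 = 1 / 2 * (θ - 1 - x * e) ^ 2 := by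
  linear_combination 1 / 2 * ((θ - 1) ^ 2 - e ^ 2) * hx

lemma abs_mul_eq_of_sq_eq_one {x : ℝ} (hx : x ^ 2 = 1) (e : ℝ) : |x * e| = |e| := by
  have abs_x : |x| = 1 := by
    rwa [← sq_abs, pow_eq_one_iff_of_nonneg (abs_nonneg x) two_ne_zero] at hx
  rw [abs_mul, abs_x, one_mul]

lemma half_sq_add_le_half_sq_sub {d ξ ε σ : ℝ} (hd : |d| ≤ σ * ε) (hξ : |ξ| = ε) :
    1 / 2 * d ^ 2 + (1 / 2 - σ) * ε ^ 2 ≤ 1 / 2 * (d - ξ) ^ 2 := by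
  have cross_le : d * ξ ≤ σ * ε ^ 2 :=
    calc d * ξ ≤ |d| * |ξ| := (le_abs_self _).trans_eq (abs_mul d ξ)
      _ ≤ σ * ε * |ξ| := by gcongr
      _ = σ * ε ^ 2 := by rw [hξ]; ring
  have noise_sq : ξ ^ 2 = ε ^ 2 := by rw [← hξ, sq_abs]
  linarith

variable {ι : Type*} [Fintype ι] {A : Finset ι} {x e w : ι → ℝ} {ε : ℝ}

lemma weighted_fit_eq_add (hx : ∀ i, x i ^ 2 = 1) (he : ∀ i ∉ A, e i = 0) :
    ∑ i, w i * x i * (x i + e i) = ∑ i, w i + ∑ i ∈ A, w i * (x i * e i) := by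
  have clean_terms : ∀ i ∈ univ, i ∉ A → w i * (x i * e i) = 0 := fun i _ hi ↦ by simp [he i hi]
  rw [sum_subset (subset_univ A) clean_terms, ← sum_add_distrib]
  refine sum_congr rfl fun i _ ↦ ?_
  linear_combination w i * hx i

lemma abs_weighted_fit_sub_one_le (hx : ∀ i, x i ^ 2 = 1) (he_corrupted : ∀ i ∈ A, |e i| ≤ ε)
    (he_clean : ∀ i ∉ A, e i = 0) (hw_nonneg : ∀ i, 0 ≤ w i) (hw : ∑ i, w i = 1) :
    |∑ i, w i * x i * (x i + e i) - 1| ≤ (∑ i ∈ A, w i) * ε := by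
  rw [weighted_fit_eq_add hx he_clean, hw, add_sub_cancel_left, sum_mul]
  refine (abs_sum_le_sum_abs _ _).trans (sum_le_sum fun i hi ↦ ?_)
  rw [abs_mul, abs_of_nonneg (hw_nonneg i), abs_mul_eq_of_sq_eq_one (hx i)]
  exact mul_le_mul_of_nonneg_left (he_corrupted i hi) (hw_nonneg i)

end NoisySigns

/-- The squared loss of the parameter `θ` on the examples `(x i, y i)`, accumulated over the rounds
`0, …, t - 1`. -/
noncomputable def cumulativeLoss {ι : Type*} (x y : ι → ℝ) (θ : ℕ → ℝ) (t : ℕ) (i : ι) : ℝ :=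
  ∑ s ∈ range t, 1 / 2 * (θ s * x i - y i) ^ 2

/-- Linear MR-LS dynamics with step size `η` on the examples `(x i, y i)`, where `y` are the
observed labels: `θ t` is fitted to the weights `p t`, which follow multiplicative weights from the
uniform distribution. The weighted least-squares solution is encoded in its closed form for
`x i = ±1`. -/
structure IsMRLSDynamics {ι : Type*} [Fintype ι] (η : ℝ) (x y : ι → ℝ) (p : ℕ → ι → ℝ)
    (θ : ℕ → ℝ) : Prop where
  start : ∀ i, p 0 i = 1 / Fintype.card ι
  fit : ∀ t, θ t = ∑ i, p t i * x i * y i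
  update : ∀ t i, p (t + 1) i = expWeights η (cumulativeLoss x y θ (t + 1)) i

namespace IsMRLSDynamics

variable {ι : Type*} [Fintype ι] {A : Finset ι} {η ε σ : ℝ} {x y e : ι → ℝ} {p : ℕ → ι → ℝ}
  {θ : ℕ → ℝ} {t : ℕ}

lemma weights_eq (h : IsMRLSDynamics η x y p θ) (t : ℕ) :
    p t = expWeights η (cumulativeLoss x y θ t) := by
  funext i
  cases t with
  | zero =>
    have no_loss : cumulativeLoss x y θ 0 = 0 := by funext i; simp [cumulativeLoss]
    rw [h.start, no_loss, expWeights_zero]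
  | succ t => exact h.update t i

lemma weights_nonneg (h : IsMRLSDynamics η x y p θ) (t : ℕ) (i : ι) : 0 ≤ p t i :=
  h.weights_eq t ▸ expWeights_nonneg η _ i

lemma mass_nonneg (h : IsMRLSDynamics η x y p θ) (A : Finset ι) (t : ℕ) : 0 ≤ ∑ i ∈ A, p t i :=
  sum_nonneg fun i _ ↦ h.weights_nonneg t i

variable [Nonempty ι]

lemma sum_weights (h : IsMRLSDynamics η x y p θ) (t : ℕ) : ∑ i, p t i = 1 :=
  h.weights_eq t ▸ sum_expWeights η _

lemma mass_le_one (h : IsMRLSDynamics η x y p θ) (A : Finset ι) (t : ℕ) : ∑ i ∈ A, p t i ≤ 1 :=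
  (sum_le_univ_sum_of_nonneg (h.weights_nonneg t)).trans_eq (h.sum_weights t)

lemma loss_gap (h : IsMRLSDynamics η x (x + e) p θ) (hx : ∀ i, x i ^ 2 = 1)
    (he_corrupted : ∀ i ∈ A, |e i| = ε) (he_clean : ∀ i ∉ A, e i = 0)
    (hmass : ∑ k ∈ A, p t k ≤ σ) {i j : ι} (hi : i ∈ A) (hj : j ∉ A) :
    1 / 2 * (θ t * x j - (x + e) j) ^ 2 + (1 / 2 - σ) * ε ^ 2
      ≤ 1 / 2 * (θ t * x i - (x + e) i) ^ 2 := by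
  have ε_nonneg : 0 ≤ ε := he_corrupted i hi ▸ abs_nonneg (e i)
  have fit_error : |θ t - 1| ≤ σ * ε := by
    rw [h.fit t]
    exact (abs_weighted_fit_sub_one_le hx (fun k hk ↦ (he_corrupted k hk).le) he_clean
      (h.weights_nonneg t) (h.sum_weights t)).trans (mul_le_mul_of_nonneg_right hmass ε_nonneg)
  have noise_abs : |x i * e i| = ε := (abs_mul_eq_of_sq_eq_one (hx i) _).trans (he_corrupted i hi)
  simp only [Pi.add_apply, half_sq_residual_eq (hx _), he_clean j hj, mul_zero, sub_zero]
  exact half_sq_add_le_half_sq_sub fit_error noise_abs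

lemma cumulativeLoss_gap (h : IsMRLSDynamics η x (x + e) p θ) (hx : ∀ i, x i ^ 2 = 1)
    (he_corrupted : ∀ i ∈ A, |e i| = ε) (he_clean : ∀ i ∉ A, e i = 0)
    (hmass : ∀ s < t, ∑ k ∈ A, p s k ≤ σ) {i j : ι} (hi : i ∈ A) (hj : j ∉ A) :
    cumulativeLoss x (x + e) θ t j + t * ((1 / 2 - σ) * ε ^ 2)
      ≤ cumulativeLoss x (x + e) θ t i := by
  calc cumulativeLoss x (x + e) θ t j + t * ((1 / 2 - σ) * ε ^ 2)
      = ∑ s ∈ range t, (1 / 2 * (θ s * x j - (x + e) j) ^ 2 + (1 / 2 - σ) * ε ^ 2) := by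
        rw [sum_add_distrib, sum_const, card_range, nsmul_eq_mul, cumulativeLoss]
    _ ≤ cumulativeLoss x (x + e) θ t i := sum_le_sum fun s hs ↦
        h.loss_gap hx he_corrupted he_clean (hmass s (mem_range.mp hs)) hi hj

lemma one_sub_mul_corrupted_mass_le (h : IsMRLSDynamics η x (x + e) p θ) (hη : 0 ≤ η)
    (hx : ∀ i, x i ^ 2 = 1) (he_corrupted : ∀ i ∈ A, |e i| = ε) (he_clean : ∀ i ∉ A, e i = 0)
    (hA : (#A : ℝ) ≤ σ * Fintype.card ι) (hmass : ∀ s < t, ∑ i ∈ A, p s i ≤ σ) :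
    (1 - σ) * ∑ i ∈ A, p t i
      ≤ σ * exp (-η * (t * ((1 / 2 - σ) * ε ^ 2))) * (1 - ∑ i ∈ A, p t i) := by
  have ratio : ∀ i ∈ A, ∀ j ∉ A, p t i ≤ exp (-η * (t * ((1 / 2 - σ) * ε ^ 2))) * p t j := by
    intro i hi j hj
    rw [h.weights_eq t]
    exact expWeights_le_exp_mul_of_add_le hη
      (h.cumulativeLoss_gap hx he_corrupted he_clean hmass hi hj)
  simpa only [h.sum_weights t] using
    one_sub_mul_sum_le_of_le_mul (h.weights_nonneg t) (exp_nonneg _) hA ratio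

lemma corrupted_mass_le (h : IsMRLSDynamics η x (x + e) p θ) (hη : 0 ≤ η)
    (hx : ∀ i, x i ^ 2 = 1) (he_corrupted : ∀ i ∈ A, |e i| = ε) (he_clean : ∀ i ∉ A, e i = 0)
    (hσ : σ ≤ 1 / 2) (hA : (#A : ℝ) ≤ σ * Fintype.card ι) (t : ℕ) : ∑ i ∈ A, p t i ≤ σ := by
  induction t using Nat.strong_induction_on with
  | _ t ih =>
    have σ_nonneg : 0 ≤ σ := nonneg_of_card_le_mul_card hA
    have gap_nonneg : 0 ≤ η * (t * ((1 / 2 - σ) * ε ^ 2)) := by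
      have : 0 ≤ 1 / 2 - σ := by linarith
      positivity
    have decay_le_one : exp (-η * (t * ((1 / 2 - σ) * ε ^ 2))) ≤ 1 :=
      exp_le_one_iff.mpr (by linarith)
    have clean_mass_nonneg : 0 ≤ 1 - ∑ i ∈ A, p t i := sub_nonneg.mpr (h.mass_le_one A t)
    have odds_le : (1 - σ) * ∑ i ∈ A, p t i ≤ σ * 1 * (1 - ∑ i ∈ A, p t i) :=
      (h.one_sub_mul_corrupted_mass_le hη hx he_corrupted he_clean hA ih).trans (by gcongr)
    linarith

end IsMRLSDynamics

theorem mr_ls_corrupted_mass_decays_general {ι : Type*} [Fintype ι] [Nonempty ι] {A : Finset ι}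
    {η ε σ : ℝ} {x e : ι → ℝ} {p : ℕ → ι → ℝ} {θ : ℕ → ℝ}
    (h : IsMRLSDynamics η x (x + e) p θ) (hη : 0 ≤ η) (hx : ∀ i, x i ^ 2 = 1)
    (he_corrupted : ∀ i ∈ A, |e i| = ε) (he_clean : ∀ i ∉ A, e i = 0)
    (hσ : σ ≤ 1 / 2) (hA : (#A : ℝ) ≤ σ * Fintype.card ι) (t : ℕ) :
    ∑ i ∈ A, p t i ≤ σ / (1 - σ) * exp (-η * ε ^ 2 * (1 / 2 - σ) * t) := by
  have σ_nonneg : 0 ≤ σ := nonneg_of_card_le_mul_card hA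
  have one_sub_pos : 0 < 1 - σ := by linarith
  have clean_mass_le_one : 1 - ∑ i ∈ A, p t i ≤ 1 := sub_le_self 1 (h.mass_nonneg A t)
  rw [div_mul_eq_mul_div, le_div_iff₀' one_sub_pos]
  calc (1 - σ) * ∑ i ∈ A, p t i
      ≤ σ * exp (-η * (t * ((1 / 2 - σ) * ε ^ 2))) * (1 - ∑ i ∈ A, p t i) :=
        h.one_sub_mul_corrupted_mass_le hη hx he_corrupted he_clean hA
          fun s _ ↦ h.corrupted_mass_le hη hx he_corrupted he_clean hσ hA s
    _ ≤ σ * exp (-η * (t * ((1 / 2 - σ) * ε ^ 2))) :=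
        mul_le_of_le_one_right (by positivity) clean_mass_le_one
    _ = σ * exp (-η * ε ^ 2 * (1 / 2 - σ) * t) := by ring_nf

lemma odds_half_sub_le {Δ : ℝ} (hΔ : 0 ≤ Δ) :
    (1 / 2 - Δ) / (1 - (1 / 2 - Δ)) ≤ 1 / (1 + Δ) := by
  rw [div_le_div_iff₀ (by linarith) (by linarith)]
  nlinarith

/-- In the noisy linear MR-LS dynamics, the total probability
mass assigned to corrupted examples decays exponentially:
Σ_{j ∈ I_cr} p_{t,j} ≤ exp(−ηε²Δt)/(1 + Δ) for every t. -/
theorem mr_ls_corrupted_mass_decays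
    (N : ℕ) (hN : 1 ≤ N)
    (ε Δ η : ℝ) (hε : 0 < ε) (hΔ0 : 0 < Δ) (hΔ : Δ < 1 / 2) (hη : 0 < η)
    (σ : ℝ) (hσ : σ = 1 / 2 - Δ)
    (Icr : Finset (Fin N)) (hIcr_pos : 0 < Icr.card) (hIcr_card : (Icr.card : ℝ) = σ * N)
    (x y e : Fin N → ℝ)
    (hx : ∀ i, x i = 1 ∨ x i = -1) (hxy : ∀ i, y i = x i)
    (he_cr : ∀ i ∈ Icr, e i = ε ∨ e i = -ε) (he_cl : ∀ i ∉ Icr, e i = 0)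
    (p : ℕ → Fin N → ℝ) (θ : ℕ → ℝ)
    (hp0 : ∀ i, p 0 i = 1 / N)
    (hθ : ∀ t, θ t = ∑ i, p t i * x i * (y i + e i))
    (hp : ∀ t i, p (t + 1) i =
      Real.exp (-η * ∑ s ∈ Finset.range (t + 1), (1 / 2) * (θ s * x i - (y i + e i)) ^ 2) /
        ∑ j, Real.exp (-η * ∑ s ∈ Finset.range (t + 1), (1 / 2) * (θ s * x j - (y j + e j)) ^ 2))
    :
    ∀ t : ℕ, ∑ j ∈ Icr, p t j ≤ Real.exp (-η * ε ^ 2 * Δ * t) / (1 + Δ) := by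
  have : Nonempty (Fin N) := ⟨⟨0, hN⟩⟩
  obtain rfl : y = x := funext hxy
  have dynamics : IsMRLSDynamics η y (y + e) p θ :=
    { start := fun i ↦ by rw [hp0, Fintype.card_fin]
      fit := hθ
      update := hp }
  have corrupted_noise : ∀ i ∈ Icr, |e i| = ε := fun i hi ↦ (abs_eq hε.le).mpr (he_cr i hi)
  have corrupted_card : (#Icr : ℝ) ≤ σ * Fintype.card (Fin N) := by
    rw [hIcr_card, Fintype.card_fin]
  have rate : 1 / 2 - σ = Δ := by rw [hσ, sub_sub_cancel]
  intro t
  calc ∑ i ∈ Icr, p t i ≤ σ / (1 - σ) * exp (-η * ε ^ 2 * (1 / 2 - σ) * t) :=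
        mr_ls_corrupted_mass_decays_general dynamics hη.le (fun i ↦ sq_eq_one_iff.mpr (hx i))
          corrupted_noise he_cl (by linarith) corrupted_card t
    _ ≤ 1 / (1 + Δ) * exp (-η * ε ^ 2 * Δ * t) := by
        rw [rate, hσ]
        exact mul_le_mul_of_nonneg_right (odds_half_sub_le hΔ0.le) (exp_nonneg _)
    _ = exp (-η * ε ^ 2 * Δ * t) / (1 + Δ) := one_div_mul_eq_div _ _
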